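/- Fix p > 0, a > 0, p_I ≥ 0, c_I ∈ [0,1], R̄ > 0 and β = 1 − p/(2^{2·R̄} − 1). Let q : ℝ → ℝ be differentiable at c ∈ [0,1], satisfy the tightness identity on an open interval containing c, with q(c) > 0 and a·q(c)·(1 − c²) + p_I·(1 − c·c_I) + β > 0. If in addition a·q(c)·c + p_I·c_I > 0 (which holds, for instance, whenever c > 0, or whenever p_I·c_I > 0), then the derivative of q at c is strictly positive; in particular, the tolerable secondary transmit power q is strictly increasing in the circularity coefficient. -/

import Mathlib

/-- Tightness identity characterizing `q x`, the maximum secondary transmit power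
at circularity coefficient `x` such that the primary rate constraint is tight. -/
def Tight (p a pI cI β : ℝ) (q : ℝ → ℝ) (x : ℝ) : Prop :=
  a^2 * (q x)^2 * (1 - x^2) =
    (1 - β) * (p + 2*(1 + a * q x + pI)) - 1 - 2*(a * q x + pI)
      - pI^2 * (1 - cI^2) - 2 * a * q x * pI * (1 - x * cI)

/-!
With `u = a q`, tightness says that `u² (1 - x²) + 2 u (pI (1 - x cI) + β)` takes the same value
at every circularity coefficient `x`. Differentiating at `c` and cancelling the factor `2 a` gives
`q'(c) (u (1 - c²) + pI (1 - c cI) + β) = q(c) (u c + pI cI)`,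
and all factors other than `q'(c)` are positive.
-/

open Filter Topology

/-- The part of the tightness identity that varies with the circularity coefficient `x`, as a
quadratic in the interference power `u = a q(x)` received by the primary user. It is constant
along any `q` for which the primary rate constraint is tight. -/
def tightnessForm (pI cI β u x : ℝ) : ℝ :=
  u ^ 2 * (1 - x ^ 2) + 2 * u * (pI * (1 - x * cI) + β)

section

variable {p a pI cI β c : ℝ} {q : ℝ → ℝ}

theorem tight_iff_tightnessForm_eq {x : ℝ} :
    Tight p a pI cI β q x ↔
      tightnessForm pI cI β (a * q x) x =
        (1 - β) * (p + 2 * (1 + pI)) - 1 - 2 * pI - pI ^ 2 * (1 - cI ^ 2) := by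
  unfold Tight tightnessForm
  constructor <;> intro h <;> linear_combination h

theorem hasDerivAt_tightnessForm {u : ℝ → ℝ} {u' : ℝ} (hu : HasDerivAt u u' c) :
    HasDerivAt (fun x ↦ tightnessForm pI cI β (u x) x)
      (2 * (u' * (u c * (1 - c ^ 2) + pI * (1 - c * cI) + β) - u c * (u c * c + pI * cI))) c := by
  have hsq : HasDerivAt (fun x : ℝ ↦ 1 - x ^ 2) (-(2 * c)) c := by
    simpa using (hasDerivAt_pow 2 c).const_sub 1
  have hlin : HasDerivAt (fun x : ℝ ↦ pI * (1 - x * cI) + β) (pI * -cI) c := by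
    simpa using ((((hasDerivAt_id' c).mul_const cI).const_sub 1).const_mul pI).add_const β
  refine (((hu.fun_pow 2).fun_mul hsq).fun_add ((hu.const_mul 2).fun_mul hlin)).congr_deriv ?_
  ring

theorem deriv_mul_eq_of_eventually_tight (ha : a ≠ 0) (hq : DifferentiableAt ℝ q c)
    (htight : ∀ᶠ x in 𝓝 c, Tight p a pI cI β q x) :
    deriv q c * (a * q c * (1 - c ^ 2) + pI * (1 - c * cI) + β) =
      q c * (a * q c * c + pI * cI) := by
  have hform := hasDerivAt_tightnessForm (pI := pI) (cI := cI) (β := β)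
    (hq.hasDerivAt.const_mul a)
  have hconst := (hasDerivAt_const c _).congr_of_eventuallyEq
    (htight.mono fun _ ↦ tight_iff_tightnessForm_eq.mp)
  have hzero := hform.unique hconst
  apply mul_left_cancel₀ ha
  linear_combination hzero / 2

theorem stmt16_general (ha : a ≠ 0) (hdiff : DifferentiableAt ℝ q c)
    (htight : ∀ᶠ x in 𝓝 c, Tight p a pI cI β q x) (hq : 0 < q c)
    (hden : 0 < a * q c * (1 - c ^ 2) + pI * (1 - c * cI) + β)
    (hnum : 0 < a * q c * c + pI * cI) :
    0 < deriv q c := by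
  rw [← mul_pos_iff_of_pos_right hden, deriv_mul_eq_of_eventually_tight ha hdiff htight]
  exact mul_pos hq hnum

end

/-- if additionally `a·q(c)·c + p_I·c_I > 0`, the tolerable
secondary power `q` has strictly positive derivative at `c`, i.e. it is strictly
increasing in the circularity coefficient. -/
theorem stmt16 (p a pI cI Rbar β c : ℝ) (q : ℝ → ℝ)
    (hp : 0 < p) (ha : 0 < a) (hpI : 0 ≤ pI) (hcI : cI ∈ Set.Icc (0:ℝ) 1)
    (hR : 0 < Rbar) (hβ : β = 1 - p / ((2:ℝ) ^ (2 * Rbar) - 1))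
    (hc : c ∈ Set.Icc (0:ℝ) 1)
    (hdiff : DifferentiableAt ℝ q c)
    (htight : ∃ ε > (0:ℝ), ∀ x ∈ Set.Ioo (c - ε) (c + ε), Tight p a pI cI β q x)
    (hq : 0 < q c)
    (hden : 0 < a * q c * (1 - c^2) + pI * (1 - c * cI) + β)
    (hnum : 0 < a * q c * c + pI * cI) :
    0 < deriv q c := by
  obtain ⟨ε, hε, htight⟩ := htight
  have hnhds := Ioo_mem_nhds (sub_lt_self c hε) (lt_add_of_pos_right c hε)
  exact stmt16_general ha.ne' hdiff (eventually_of_mem hnhds htight) hq hden hnum
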